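/- arXiv:1209.1943 — 2 statements merged into one kernel-verified Lean document; each statement's English description precedes it below -/
import Mathlib

section
/- Let ρ be a propositional formula built from distinct propositional letters P₁, …, Pₙ using ¬, ∧, ∨, and let φ_ρ be the quantifier-free 4LQS-formula obtained from ρ by replacing each occurrence of Pᵢ with the atomic formula xᵢ ∈ X¹, where x₁, …, xₙ are distinct sort-0 variables and X¹ is a fixed sort-1 variable. Then ρ is satisfiable by some Boolean valuation of its letters if and only if φ_ρ is satisfiable by some 4LQS-interpretation. -/
/-!
Satisfaction of `φ_ρ` in an interpretation `M` depends only on the truth values of the atoms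
`xᵢ ∈ X¹`, so it agrees with the evaluation of `ρ` under any valuation `v` such that
`v i = true ↔ M xᵢ ∈ M X¹` (`propToFml0_sat_iff`). Every `M` determines such a `v`; conversely,
since the `xᵢ` are distinct, every `v` comes from the interpretation over `ℕ` that sends each
sort-0 variable to itself and `X¹` to the set of those `xᵢ` whose letter is true.
-/

universe u

/-! ### 4LQS syntax -/

/-- Terms of sort 2: sort-2 variables and pair terms `⟨x,y⟩` with `x`, `y` of sort 0. -/
inductive Term2 : Type
  | var (X : ℕ)
  | pair (x y : ℕ)
  deriving DecidableEq

/-- Quantifier-free atomic formulae of 4LQS: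
level 0: `x = y`, `x ∈ X¹`; level 1: `X¹ = Y¹`, `X¹ ∈ X²`;
level 2: `T² = U²`, `T² ∈ X³` with `T²`, `U²` terms of sort 2. -/
inductive Atom : Type
  | eq0 (x y : ℕ)
  | mem0 (x X : ℕ)
  | eq1 (X Y : ℕ)
  | mem1 (X Y : ℕ)
  | eq2 (t s : Term2)
  | mem2 (t : Term2) (X : ℕ)
  deriving DecidableEq

/-- Propositional combinations of quantifier-free atomic formulae
(the matrices of purely universal formulae of level 1). -/
inductive Fml0 : Type
  | atom (a : Atom)
  | not (φ : Fml0)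
  | and (φ ψ : Fml0)
  | or (φ ψ : Fml0)
  deriving DecidableEq

/-- Propositional combinations of quantifier-free atomic formulae and of purely universal
formulae of level 1 (the matrices of purely universal formulae of level 2). -/
inductive Fml1 : Type
  | atom (a : Atom)
  | pu1 (zs : List ℕ) (φ : Fml0)
  | not (φ : Fml1)
  | and (φ ψ : Fml1)
  | or (φ ψ : Fml1)
  deriving DecidableEq

/-- Propositional combinations of quantifier-free atomic formulae and of purely universal
formulae of levels 1 and 2 (the matrices of purely universal formulae of level 3). -/
inductive Fml2 : Type
  | atom (a : Atom)
  | pu1 (zs : List ℕ) (φ : Fml0)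
  | pu2 (Zs : List ℕ) (φ : Fml1)
  | not (φ : Fml2)
  | and (φ ψ : Fml2)
  | or (φ ψ : Fml2)
  deriving DecidableEq

/-- Conjuncts of a normalized 4LQS^R-conjunction: quantifier-free literals (an atomic
formula or its negation) and purely universal formulae of levels 1, 2 and 3. -/
inductive Conjunct : Type
  | lit (pos : Bool) (a : Atom)
  | pu1 (zs : List ℕ) (φ : Fml0)
  | pu2 (Zs : List ℕ) (φ : Fml1)
  | pu3 (Zs : List ℕ) (φ : Fml2)
  deriving DecidableEq

/-! ### 4LQS semantics -/

/-- A 4LQS-interpretation with domain `D`. -/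
structure Interp (D : Type u) where
  v0 : ℕ → D
  v1 : ℕ → Set D
  v2 : ℕ → Set (Set D)
  v3 : ℕ → Set (Set (Set D))

namespace Interp

variable {D : Type u}

/-- `M[x/u]`: update of a sort-0 variable. -/
def upd0 (M : Interp D) (z : ℕ) (u : D) : Interp D :=
  { M with v0 := Function.update M.v0 z u }

/-- Update of a sort-1 variable. -/
def upd1 (M : Interp D) (Z : ℕ) (U : Set D) : Interp D :=
  { M with v1 := Function.update M.v1 Z U }

/-- Update of a sort-2 variable. -/
def upd2 (M : Interp D) (Z : ℕ) (U : Set (Set D)) : Interp D :=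
  { M with v2 := Function.update M.v2 Z U }

/-- Simultaneous update of a list of (distinct) sort-0 variables. -/
def upd0L (M : Interp D) (zs : List ℕ) (us : List D) : Interp D :=
  (zs.zip us).foldl (fun N p => N.upd0 p.1 p.2) M

/-- Simultaneous update of a list of (distinct) sort-1 variables. -/
def upd1L (M : Interp D) (Zs : List ℕ) (Us : List (Set D)) : Interp D :=
  (Zs.zip Us).foldl (fun N p => N.upd1 p.1 p.2) M

/-- Simultaneous update of a list of (distinct) sort-2 variables. -/
def upd2L (M : Interp D) (Zs : List ℕ) (Us : List (Set (Set D))) : Interp D :=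
  (Zs.zip Us).foldl (fun N p => N.upd2 p.1 p.2) M

end Interp

/-- The Kuratowski pair `⟨x,y⟩ = {{x}, {x,y}}`. -/
def kpair {D : Type u} (x y : D) : Set (Set D) := {{x}, {x, y}}

/-- Value of a term of sort 2 (pair terms are interpreted à la Kuratowski). -/
def Term2.val {D : Type u} (M : Interp D) : Term2 → Set (Set D)
  | .var X => M.v2 X
  | .pair x y => kpair (M.v0 x) (M.v0 y)

/-- Satisfaction of a quantifier-free atomic formula. -/
def Atom.sat {D : Type u} (M : Interp D) : Atom → Prop
  | .eq0 x y => M.v0 x = M.v0 y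
  | .mem0 x X => M.v0 x ∈ M.v1 X
  | .eq1 X Y => M.v1 X = M.v1 Y
  | .mem1 X Y => M.v1 X ∈ M.v2 Y
  | .eq2 t s => t.val M = s.val M
  | .mem2 t X => t.val M ∈ M.v3 X

/-- Satisfaction of a propositional combination of quantifier-free atomic formulae. -/
def Fml0.sat {D : Type u} (M : Interp D) : Fml0 → Prop
  | .atom a => a.sat M
  | .not φ => ¬ φ.sat M
  | .and φ ψ => φ.sat M ∧ ψ.sat M
  | .or φ ψ => φ.sat M ∨ ψ.sat M

/-- Satisfaction of a purely universal formula `(∀z₁)…(∀zₙ)φ₀` of level 1: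
the sort-0 quantifiers range over the whole domain. -/
def PU1sat {D : Type u} : Interp D → List ℕ → Fml0 → Prop
  | M, [], φ => φ.sat M
  | M, z :: zs, φ => ∀ u : D, PU1sat (M.upd0 z u) zs φ

/-- Satisfaction of the matrix of a purely universal formula of level 2. -/
def Fml1.sat {D : Type u} (M : Interp D) : Fml1 → Prop
  | .atom a => a.sat M
  | .pu1 zs φ => PU1sat M zs φ
  | .not φ => ¬ φ.sat M
  | .and φ ψ => φ.sat M ∧ ψ.sat M
  | .or φ ψ => φ.sat M ∨ ψ.sat M

/-- Satisfaction of a purely universal formula `(∀Z¹₁)…(∀Z¹ₘ)φ₁` of level 2: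
the sort-1 quantifiers range over the powerset of the domain. -/
def PU2sat {D : Type u} : Interp D → List ℕ → Fml1 → Prop
  | M, [], φ => φ.sat M
  | M, Z :: Zs, φ => ∀ U : Set D, PU2sat (M.upd1 Z U) Zs φ

/-- Satisfaction of the matrix of a purely universal formula of level 3. -/
def Fml2.sat {D : Type u} (M : Interp D) : Fml2 → Prop
  | .atom a => a.sat M
  | .pu1 zs φ => PU1sat M zs φ
  | .pu2 Zs φ => PU2sat M Zs φ
  | .not φ => ¬ φ.sat M
  | .and φ ψ => φ.sat M ∧ ψ.sat M
  | .or φ ψ => φ.sat M ∨ ψ.sat M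

/-- Satisfaction of a purely universal formula `(∀Z²₁)…(∀Z²ₚ)φ₂` of level 3:
the sort-2 quantifiers range over the second powerset of the domain. -/
def PU3sat {D : Type u} : Interp D → List ℕ → Fml2 → Prop
  | M, [], φ => φ.sat M
  | M, Z :: Zs, φ => ∀ U : Set (Set D), PU3sat (M.upd2 Z U) Zs φ

/-- Satisfaction of a conjunct. -/
def Conjunct.sat {D : Type u} (M : Interp D) : Conjunct → Prop
  | .lit true a => a.sat M
  | .lit false a => ¬ a.sat M
  | .pu1 zs φ => PU1sat M zs φ
  | .pu2 Zs φ => PU2sat M Zs φ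
  | .pu3 Zs φ => PU3sat M Zs φ

/-- Satisfaction of a (normalized) conjunction, given as the list of its conjuncts. -/
def SatConj {D : Type u} (M : Interp D) (ψ : List Conjunct) : Prop :=
  ∀ c ∈ ψ, c.sat M

/-! ### Propositional logic and the NP-hardness reduction -/

/-- Propositional formulae built from letters using `¬`, `∧`, `∨`. -/
inductive PropForm : Type
  | letter (i : ℕ)
  | not (ρ : PropForm)
  | and (ρ σ : PropForm)
  | or (ρ σ : PropForm)

/-- Evaluation of a propositional formula under a Boolean valuation of its letters. -/
def PropForm.eval (v : ℕ → Bool) : PropForm → Bool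
  | .letter i => v i
  | .not ρ => !ρ.eval v
  | .and ρ σ => ρ.eval v && σ.eval v
  | .or ρ σ => ρ.eval v || σ.eval v

/-- The quantifier-free 4LQS-formula `φ_ρ` obtained from `ρ` by replacing each occurrence
of the letter `Pᵢ` with the atomic formula `xᵢ ∈ X¹`, where the `xᵢ` are distinct sort-0
variables (given by the injective map `x`) and `X¹` is a fixed sort-1 variable. -/
def propToFml0 (x : ℕ → ℕ) (X : ℕ) : PropForm → Fml0
  | .letter i => .atom (.mem0 (x i) X)
  | .not ρ => .not (propToFml0 x X ρ)
  | .and ρ σ => .and (propToFml0 x X ρ) (propToFml0 x X σ)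
  | .or ρ σ => .or (propToFml0 x X ρ) (propToFml0 x X σ)

theorem propToFml0_sat_iff {D : Type u} (M : Interp D) (x : ℕ → ℕ) (X : ℕ) (v : ℕ → Bool)
    (h : ∀ i, v i = true ↔ M.v0 (x i) ∈ M.v1 X) (ρ : PropForm) :
    (propToFml0 x X ρ).sat M ↔ ρ.eval v = true := by
  induction ρ with
  | letter i => exact (h i).symm
  | not ρ ih => simp [propToFml0, Fml0.sat, PropForm.eval, ih]
  | and ρ σ ih₁ ih₂ => simp [propToFml0, Fml0.sat, PropForm.eval, ih₁, ih₂]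
  | or ρ σ ih₁ ih₂ => simp [propToFml0, Fml0.sat, PropForm.eval, ih₁, ih₂]

/-- A propositional formula `ρ` is satisfiable by a Boolean valuation iff its 4LQS
translation `φ_ρ` is satisfiable by a 4LQS-interpretation. -/
theorem stmt_15 (ρ : PropForm) (x : ℕ → ℕ) (hx : Function.Injective x) (X : ℕ) :
    (∃ v : ℕ → Bool, ρ.eval v = true) ↔
      ∃ (D : Type) (_ : Nonempty D) (M : Interp D), (propToFml0 x X ρ).sat M := by
  constructor
  · rintro ⟨v, hv⟩
    refine ⟨ℕ, inferInstance,
      ⟨id, fun _ => x '' {i | v i = true}, fun _ => ∅, fun _ => ∅⟩, ?_⟩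
    refine (propToFml0_sat_iff _ x X v (fun i => ?_) ρ).2 hv
    simp [hx.eq_iff]
  · rintro ⟨D, _, M, hM⟩
    classical
    exact ⟨fun i => decide (M.v0 (x i) ∈ M.v1 X),
      (propToFml0_sat_iff M x X _ (fun _ => decide_eq_true_iff) ρ).1 hM⟩
end

section
/- For every modal formula φ of the logic K45, φ is satisfiable at some world of some Kripke model K = (W, R, h) (with respect to the global K45 semantics of □ and ◇ described in the context) if and only if there exist a 4LQS^R-interpretation M and a sort-0 variable x such that M satisfies the translation T_{K45}(φ) together with the atomic formula x ∈ X¹_φ. -/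
/-!
A Kripke model and a 4LQS-interpretation carry the same information as soon as two things are
matched: the accessibility relation with the set of Kuratowski pairs `X³_R`, and the truth set of
each formula `χ` with the value of `X¹_χ`. Under such a match every clause of the translation is
literally the K45 truth clause of the corresponding connective.

From an interpretation satisfying the translation, read off the relation and the values of the
letters; the clauses then force, by induction on the formula, `X¹_χ` to be the truth set of `χ`
(`mSat_toKripke_iff`). From a Kripke model, interpret each `X¹_χ` as the truth set of `χ`, which is
possible because distinct formulae have distinct variables, and `X³_R` as the set of pairs
`⟨u, v⟩` with `u R v`, which recovers `R` because Kuratowski pairs are injective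
(`ofKripke_sat`).
-/


universe u

/-! ### General 4LQS formulae with sort-0 quantification (the shape used by the
translation of K45), and their semantics -/

/-- Formulae built from quantifier-free 4LQS atoms by propositional connectives and
universal quantification over sort-0 variables. -/
inductive GF : Type
  | atom (a : Atom)
  | not (φ : GF)
  | and (φ ψ : GF)
  | or (φ ψ : GF)
  | all0 (z : ℕ) (φ : GF)

/-- Satisfaction of such a formula by a 4LQS-interpretation: sort-0 quantifiers range
over the whole domain. -/
def GF.sat {D : Type u} : Interp D → GF → Prop
  | M, .atom a => a.sat M
  | M, .not φ => ¬ GF.sat M φ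
  | M, .and φ ψ => GF.sat M φ ∧ GF.sat M ψ
  | M, .or φ ψ => GF.sat M φ ∨ GF.sat M ψ
  | M, .all0 z φ => ∀ u : D, GF.sat (M.upd0 z u) φ

/-- `A → B` as a 4LQS formula (`¬A ∨ B`). -/
def GF.imp (a b : GF) : GF := .or (.not a) b

/-- `A ↔ B` as a 4LQS formula. -/
def GF.iff (a b : GF) : GF := .and (GF.imp a b) (GF.imp b a)

/-! ### Modal logic K45 -/

/-- Modal formulae. -/
inductive ModalForm : Type
  | letter (p : ℕ)
  | not (φ : ModalForm)
  | and (φ ψ : ModalForm)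
  | or (φ ψ : ModalForm)
  | box (φ : ModalForm)
  | dia (φ : ModalForm)

/-- A Kripke model over the set of worlds `W`: an accessibility relation and a valuation
of the propositional letters. -/
structure Kripke (W : Type) : Type where
  R : W → W → Prop
  h : ℕ → Set W

/-- Satisfaction at a world, with the global K45 semantics of `□` and `◇`:
`K, w ⊨ □ψ` iff `K, v ⊨ ψ` for every world `v` having an `R`-predecessor, and
`K, w ⊨ ◇ψ` iff `K, v ⊨ ψ` for some world `v` having an `R`-predecessor. -/
def MSat {W : Type} (K : Kripke W) : W → ModalForm → Prop
  | w, .letter p => w ∈ K.h p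
  | w, .not φ => ¬ MSat K w φ
  | w, .and φ ψ => MSat K w φ ∧ MSat K w ψ
  | w, .or φ ψ => MSat K w φ ∨ MSat K w ψ
  | _, .box φ => ∀ v : W, (∃ u : W, K.R u v) → MSat K v φ
  | _, .dia φ => ∃ v : W, (∃ u : W, K.R u v) ∧ MSat K v φ

/-! ### The translation T_{K45} into 4LQS^R

To each modal subformula `χ` the (distinct) sort-1 variable `X¹_χ = enc χ` is associated
(`enc` is injective); `XR` is the fixed sort-3 variable encoding the accessibility
relation as a set of Kuratowski pairs.  The fixed sort-0 variables `0`, `1`, `2` play the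
roles of `z`, `z₁`, `z₂`; each quantified clause of the translation is closed, so these
can be reused throughout.  The empty formula `Λ` is rendered by the valid atom `z = z`. -/

/-- `z ∈ X¹` as a formula. -/
def memG (z X : ℕ) : GF := .atom (.mem0 z X)

/-- `⟨z₂,z₁⟩ ∈ X³_R` as a formula (with `z₁ = 1`, `z₂ = 2`). -/
def pairInR (XR : ℕ) : GF := .atom (.mem2 (.pair 2 1) XR)

/-- `¬(∀z₂)¬(⟨z₂,z₁⟩ ∈ X³_R)`: the world `z₁` has an `R`-predecessor. -/
def hasPredG (XR : ℕ) : GF := .not (.all0 2 (.not (pairInR XR)))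

/-- The translation `T_{K45}` of a modal formula into 4LQS^R. -/
def TransK45 (enc : ModalForm → ℕ) (XR : ℕ) : ModalForm → GF
  | .letter _ => .atom (.eq0 0 0)
  | .not χ =>
      .and (.all0 0 (GF.iff (memG 0 (enc (.not χ))) (.not (memG 0 (enc χ)))))
        (TransK45 enc XR χ)
  | .and χ₁ χ₂ =>
      .and (.all0 0 (GF.iff (memG 0 (enc (.and χ₁ χ₂)))
          (.and (memG 0 (enc χ₁)) (memG 0 (enc χ₂)))))
        (.and (TransK45 enc XR χ₁) (TransK45 enc XR χ₂))
  | .or χ₁ χ₂ =>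
      .and (.all0 0 (GF.iff (memG 0 (enc (.or χ₁ χ₂)))
          (.or (memG 0 (enc χ₁)) (memG 0 (enc χ₂)))))
        (.and (TransK45 enc XR χ₁) (TransK45 enc XR χ₂))
  | .box χ =>
      .and (.and
        (GF.imp (.all0 1 (GF.imp (hasPredG XR) (memG 1 (enc χ))))
          (.all0 0 (memG 0 (enc (.box χ)))))
        (GF.imp (.not (.all0 1 (.not (.and (hasPredG XR) (.not (memG 1 (enc χ)))))))
          (.all0 0 (.not (memG 0 (enc (.box χ)))))))
        (TransK45 enc XR χ)
  | .dia χ =>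
      .and (.and
        (GF.imp (.not (.all0 1 (.not (.and (hasPredG XR) (memG 1 (enc χ))))))
          (.all0 0 (memG 0 (enc (.dia χ)))))
        (GF.imp (.all0 1 (.or (.all0 2 (.not (pairInR XR))) (.not (memG 1 (enc χ)))))
          (.all0 0 (.not (memG 0 (enc (.dia χ)))))))
        (TransK45 enc XR χ)

theorem kpair_inj {D : Type u} {a b c d : D} (h : kpair a b = kpair c d) : a = c ∧ b = d := by
  have h1 : ({a} : Set D) ∈ kpair c d := by rw [← h]; simp [kpair]
  have h2 : ({a, b} : Set D) ∈ kpair c d := by rw [← h]; simp [kpair]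
  have h3 : ({c, d} : Set D) ∈ kpair a b := by rw [h]; simp [kpair]
  simp only [kpair, Set.mem_insert_iff, Set.mem_singleton_iff, Set.ext_iff] at h1 h2 h3
  have hac : c = a := by
    rcases h1 with h1 | h1
    · exact (h1 c).2 rfl
    · exact (h1 c).2 (Or.inl rfl)
  have hb : b = c ∨ b = d := by
    rcases h2 with h2 | h2
    · exact Or.inl ((h2 b).1 (Or.inr rfl))
    · exact (h2 b).1 (Or.inr rfl)
  have hd : d = a ∨ d = b := by
    rcases h3 with h3 | h3
    · exact Or.inl ((h3 d).1 (Or.inr rfl))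
    · exact (h3 d).1 (Or.inr rfl)
  grind

/-- The Kripke model read off an interpretation: worlds are the elements of the domain, `u R v`
holds iff the Kuratowski pair `⟨u, v⟩` belongs to `X³_R`, and the letter `p` holds on `X¹_p`. -/
def toKripke (enc : ModalForm → ℕ) (XR : ℕ) {D : Type} (M : Interp D) : Kripke D where
  R u v := kpair u v ∈ M.v3 XR
  h p := M.v1 (enc (.letter p))

theorem mSat_toKripke_iff (enc : ModalForm → ℕ) (XR : ℕ) {D : Type} (M : Interp D)
    (χ : ModalForm) (h : GF.sat M (TransK45 enc XR χ)) (w : D) :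
    MSat (toKripke enc XR M) w χ ↔ w ∈ M.v1 (enc χ) := by
  induction χ generalizing w with
  | letter p => exact Iff.rfl
  | not χ ih =>
    have h1 := h.1 w
    simp [GF.sat, GF.iff, GF.imp, memG, Atom.sat, Interp.upd0] at h1
    have := ih h.2 w
    simp only [MSat]
    tauto
  | and χ₁ χ₂ ih₁ ih₂ =>
    have h1 := h.1 w
    simp [GF.sat, GF.iff, GF.imp, memG, Atom.sat, Interp.upd0] at h1
    have := ih₁ h.2.1 w
    have := ih₂ h.2.2 w
    simp only [MSat]
    tauto
  | or χ₁ χ₂ ih₁ ih₂ =>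
    have h1 := h.1 w
    simp [GF.sat, GF.iff, GF.imp, memG, Atom.sat, Interp.upd0] at h1
    have := ih₁ h.2.1 w
    have := ih₂ h.2.2 w
    simp only [MSat]
    tauto
  | box χ ih =>
    obtain ⟨h1, h2⟩ := h.1
    have ih := ih h.2
    simp [GF.sat, GF.imp, memG, hasPredG, pairInR, Atom.sat, Term2.val, Interp.upd0] at h1 h2
    simp only [MSat, ih]
    simp only [toKripke]
    grind
  | dia χ ih =>
    obtain ⟨h1, h2⟩ := h.1
    have ih := ih h.2
    simp [GF.sat, GF.imp, memG, hasPredG, pairInR, Atom.sat, Term2.val, Interp.upd0] at h1 h2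
    simp only [MSat, ih]
    simp only [toKripke]
    grind

/-- The interpretation built from a Kripke model: `X¹_χ` is the truth set of `χ`, every sort-3
variable is the set of pairs `⟨u, v⟩` with `u R v`, and every sort-0 variable is the given
world `w`. A sort-1 variable outside the range of `enc` is the empty set. -/
def ofKripke (enc : ModalForm → ℕ) {W : Type} (K : Kripke W) (w : W) : Interp W where
  v0 _ := w
  v1 n := {v | ∃ χ, enc χ = n ∧ MSat K v χ}
  v2 _ := ∅
  v3 _ := {P | ∃ u v, K.R u v ∧ P = kpair u v}

theorem mem_ofKripke_v1 {enc : ModalForm → ℕ} (henc : Function.Injective enc) {W : Type}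
    (K : Kripke W) (w v : W) (χ : ModalForm) :
    v ∈ (ofKripke enc K w).v1 (enc χ) ↔ MSat K v χ := by
  simp [ofKripke, henc.eq_iff]

theorem kpair_mem_ofKripke_v3 (enc : ModalForm → ℕ) (XR : ℕ) {W : Type} (K : Kripke W)
    (w u v : W) : kpair u v ∈ (ofKripke enc K w).v3 XR ↔ K.R u v := by
  constructor
  · rintro ⟨u', v', h, he⟩
    obtain ⟨rfl, rfl⟩ := kpair_inj he
    exact h
  · exact fun h => ⟨u, v, h, rfl⟩

theorem ofKripke_sat {enc : ModalForm → ℕ} (henc : Function.Injective enc) (XR : ℕ) {W : Type}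
    (K : Kripke W) (w : W) (χ : ModalForm) :
    GF.sat (ofKripke enc K w) (TransK45 enc XR χ) := by
  induction χ with
  | letter p => exact rfl
  | not χ ih =>
    refine ⟨?_, ih⟩
    simp [GF.sat, GF.iff, GF.imp, memG, Atom.sat, Interp.upd0, mem_ofKripke_v1 henc, MSat]
    tauto
  | and χ₁ χ₂ ih₁ ih₂ =>
    refine ⟨?_, ih₁, ih₂⟩
    simp [GF.sat, GF.iff, GF.imp, memG, Atom.sat, Interp.upd0, mem_ofKripke_v1 henc, MSat]
    grind
  | or χ₁ χ₂ ih₁ ih₂ =>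
    refine ⟨?_, ih₁, ih₂⟩
    simp [GF.sat, GF.iff, GF.imp, memG, Atom.sat, Interp.upd0, mem_ofKripke_v1 henc, MSat]
    grind
  | box χ ih =>
    refine ⟨?_, ih⟩
    simp [GF.sat, GF.imp, memG, hasPredG, pairInR, Atom.sat, Term2.val, Interp.upd0,
      mem_ofKripke_v1 henc, kpair_mem_ofKripke_v3, MSat]
    grind
  | dia χ ih =>
    refine ⟨?_, ih⟩
    simp [GF.sat, GF.imp, memG, hasPredG, pairInR, Atom.sat, Term2.val, Interp.upd0,
      mem_ofKripke_v1 henc, kpair_mem_ofKripke_v3, MSat]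
    grind

/-- Correctness of the translation of K45 into 4LQS^R: a modal formula `φ` is satisfiable
at some world of some Kripke model (with the global K45 semantics) iff there are a
4LQS^R-interpretation `M` and a sort-0 variable `x` such that `M` satisfies
`T_{K45}(φ)` together with `x ∈ X¹_φ`. -/
theorem stmt_16 (enc : ModalForm → ℕ) (henc : Function.Injective enc) (XR : ℕ)
    (φ : ModalForm) :
    (∃ (W : Type) (_ : Nonempty W) (K : Kripke W) (w : W), MSat K w φ) ↔
      ∃ (D : Type) (_ : Nonempty D) (M : Interp D) (x : ℕ),
        GF.sat M (TransK45 enc XR φ) ∧ M.v0 x ∈ M.v1 (enc φ) := by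
  constructor
  · rintro ⟨W, hW, K, w, hw⟩
    exact ⟨W, hW, ofKripke enc K w, 0, ofKripke_sat henc XR K w φ,
      (mem_ofKripke_v1 henc K w w φ).2 hw⟩
  · rintro ⟨D, hD, M, x, hM, hx⟩
    exact ⟨D, hD, toKripke enc XR M, M.v0 x, (mSat_toKripke_iff enc XR M φ hM _).2 hx⟩
end
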